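/- Elimination of fixed letters from a circumscriptive atom: let φ = CIRC(ψ;P;Z) be a circumscriptive atom of L_CIRC and let Q be its set of fixed letters (the atoms of At not in P∪Z). For each q ∈ Q introduce a fresh atom q', let ψ' = ψ ∧ ⋀_{q∈Q}(q ↔ ¬q'), P' = P ∪ Q ∪ {q' : q ∈ Q}, and φ' = CIRC(ψ';P';Z). Then, modulo the set of all auxiliary letters q', the formulas φ and φ' are logically equivalent: M ⊨ φ iff some extension of M to the letters {q' : q ∈ Q} is a model of φ', and the restriction of every model of φ' to the original atoms is a model of φ. -/

import Mathlib

/-!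
STATEMENT 13: Elimination of fixed letters from a circumscriptive atom
(the de Kleer–Konolige transformation), for `L_CIRC`.
-/

namespace NestedCirc

universe u
variable {α : Type u}

/-- `M ≤_{P;Z} M'`. -/
def lePZ {β : Type*} (P Z M M' : Set β) : Prop :=
  M ∩ P ⊆ M' ∩ P ∧ M ∩ (P ∪ Z)ᶜ = M' ∩ (P ∪ Z)ᶜ

/-- `M <_{P;Z} M'` (strict preference). -/
def ltPZ {β : Type*} (P Z M M' : Set β) : Prop := lePZ P Z M M' ∧ ¬ lePZ P Z M' M

/-- Formulas of `L_CIRC` over atoms `β` (with a constant `tru` for building conjunctions). -/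
inductive LCirc (β : Type u) : Type u where
  | tru : LCirc β
  | atom : β → LCirc β
  | conj : LCirc β → LCirc β → LCirc β
  | neg : LCirc β → LCirc β
  | circ : LCirc β → Set β → Set β → LCirc β

/-- Satisfaction for `L_CIRC`: models of `CIRC(φ;P;Z)` are the `(P;Z)`-minimal models of `φ`. -/
def LCirc.sat {β : Type u} : LCirc β → Set β → Prop
  | .tru, _ => True
  | .atom a, M => a ∈ M
  | .conj φ ψ, M => φ.sat M ∧ ψ.sat M
  | .neg φ, M => ¬ φ.sat M
  | .circ φ P Z, M => φ.sat M ∧ ∀ N : Set β, φ.sat N → ¬ ltPZ P Z N M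

def LCirc.conjList {β : Type u} (l : List (LCirc β)) : LCirc β := l.foldr .conj .tru

/-- `a ↔ b` as an `L_CIRC` formula. -/
def LCirc.iffL {β : Type u} (a b : LCirc β) : LCirc β :=
  .conj (.neg (.conj a (.neg b))) (.neg (.conj (.neg a) b))

/-- Embedding of `L_CIRC` formulas over `α` into `L_CIRC` formulas over the extended
alphabet `α ⊕ α`, where `Sum.inl q` is the original atom `q` and `Sum.inr q` is the
fresh auxiliary atom `q'`. -/
def LCirc.emb : LCirc α → LCirc (α ⊕ α)
  | .tru => .tru
  | .atom a => .atom (Sum.inl a)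
  | .conj φ ψ => .conj φ.emb ψ.emb
  | .neg φ => .neg φ.emb
  | .circ φ P Z => .circ φ.emb (Sum.inl '' P) (Sum.inl '' Z)

variable [Fintype α]

/-- A list enumerating a set of atoms (the alphabet is finite). -/
noncomputable def listOf (S : Set α) : List α := (Set.toFinite S).toFinset.toList

/-- The formula `⋀_{q ∈ Q} (q ↔ ¬q')` over the extended alphabet. -/
noncomputable def iffConj (Q : Set α) : LCirc (α ⊕ α) :=
  LCirc.conjList ((listOf Q).map fun q =>
    LCirc.iffL (.atom (Sum.inl q)) (.neg (.atom (Sum.inr q))))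

/-!
Let `Q` be the set of fixed letters. On interpretations satisfying `⋀_{q∈Q}(q ↔ ¬q')`, minimizing
both `q` and `q'` amounts to fixing both, because shrinking one of them enlarges the other. Hence
`φ'` is equivalent to the circumscription of `ψ'` with `P` minimized and `Q ∪ {q' : q ∈ Q}` fixed.
A conjunct about fixed letters only can be pulled out of a circumscription, so `φ'` is equivalent
to `CIRC(ψ;P;Z) ∧ ⋀_{q∈Q}(q ↔ ¬q')`, and every interpretation of the original atoms extends
to a model of the biconditionals.
-/

section Preference

variable {β γ : Type*} {P Z M N : Set β}

theorem lePZ_iff :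
    lePZ P Z M N ↔ (∀ a ∈ P, a ∈ M → a ∈ N) ∧ ∀ a ∉ P ∪ Z, (a ∈ M ↔ a ∈ N) := by
  refine and_congr ⟨fun h a haP haM => (h ⟨haM, haP⟩).1, fun h a ha => ⟨h a ha.2 ha.1, ha.2⟩⟩ ?_
  simp only [Set.ext_iff, Set.mem_inter_iff, Set.mem_compl_iff, and_congr_left_iff]

theorem lePZ_image_iff {f : γ → β} (hf : f.Injective) {P Z : Set γ} :
    lePZ (f '' P) (f '' Z) M N ↔
      lePZ P Z (f ⁻¹' M) (f ⁻¹' N) ∧ M \ Set.range f = N \ Set.range f := by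
  have fixed_iff : (∀ b ∉ f '' (P ∪ Z), (b ∈ M ↔ b ∈ N)) ↔
      (∀ a ∉ P ∪ Z, (f a ∈ M ↔ f a ∈ N)) ∧ M \ Set.range f = N \ Set.range f := by
    simp only [Set.ext_iff, Set.mem_sdiff, and_congr_left_iff]
    refine ⟨fun h => ⟨fun a ha => h _ (by rwa [hf.mem_set_image]),
      fun b hb => h b fun hb' => hb (Set.image_subset_range f _ hb')⟩, ?_⟩
    rintro ⟨h_range, h_compl⟩ b hb
    by_cases hbf : b ∈ Set.range f
    · obtain ⟨a, rfl⟩ := hbf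
      exact h_range a (by rwa [hf.mem_set_image] at hb)
    · exact h_compl b hbf
  simp only [lePZ_iff, ← Set.image_union, fixed_iff, Set.forall_mem_image, Set.mem_preimage,
    and_assoc]

theorem ltPZ_image_iff {f : γ → β} (hf : f.Injective) {P Z : Set γ} :
    ltPZ (f '' P) (f '' Z) M N ↔
      ltPZ P Z (f ⁻¹' M) (f ⁻¹' N) ∧ M \ Set.range f = N \ Set.range f := by
  simp only [ltPZ, lePZ_image_iff hf, eq_comm (a := N \ Set.range f)]
  tauto

theorem exists_preimage_eq_and_sdiff_range_eq {f : γ → β} (hf : f.Injective)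
    (M : Set γ) (N : Set β) :
    ∃ N' : Set β, f ⁻¹' N' = M ∧ N' \ Set.range f = N \ Set.range f := by
  refine ⟨f '' M ∪ N \ Set.range f, ?_, ?_⟩
  · ext a
    simp [hf.mem_set_image]
  · rw [Set.union_sdiff_distrib, Set.sdiff_eq_empty.2 (Set.image_subset_range f M),
      Set.empty_union, sdiff_idem]

end Preference

section Complemented

variable {β : Type*} {P Z D M N : Set β} {c : β → β}

/-- `M` gives each letter `q ∈ D` and its counterpart `c q` opposite truth values. -/
def ComplementedOn (c : β → β) (D M : Set β) : Prop :=
  ∀ q ∈ D, (c q ∈ M ↔ q ∉ M)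

theorem ComplementedOn.congr (hc : Set.MapsTo c D D) (hMN : ∀ q ∈ D, (q ∈ M ↔ q ∈ N))
    (hM : ComplementedOn c D M) : ComplementedOn c D N := fun q hq => by
  rw [← hMN q hq, ← hMN (c q) (hc hq), hM q hq]

theorem ComplementedOn.mem_iff_mem_of_imp (hc : Set.MapsTo c D D)
    (hM : ComplementedOn c D M) (hN : ComplementedOn c D N)
    (hMN : ∀ q ∈ D, q ∈ M → q ∈ N) {q : β} (hq : q ∈ D) : q ∈ M ↔ q ∈ N := by
  refine ⟨hMN q hq, fun hqN => ?_⟩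
  by_contra hqM
  exact (hN q hq).1 (hMN (c q) (hc hq) ((hM q hq).2 hqM)) hqN

theorem lePZ_union_iff_of_complementedOn (hc : Set.MapsTo c D D) (hDZ : Disjoint D Z)
    (hM : ComplementedOn c D M) (hN : ComplementedOn c D N) :
    lePZ (P ∪ D) Z M N ↔ lePZ P Z M N := by
  simp only [lePZ_iff]
  constructor
  · rintro ⟨h_min, h_fix⟩
    refine ⟨fun a ha => h_min a (.inl ha), fun a ha => ?_⟩
    by_cases haD : a ∈ D
    · exact hM.mem_iff_mem_of_imp hc hN (fun q hq => h_min q (.inr hq)) haD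
    · exact h_fix a (by simp_all)
  · rintro ⟨h_min, h_fix⟩
    refine ⟨fun a ha => ?_, fun a ha => h_fix a (by simp_all)⟩
    by_cases haP : a ∈ P
    · exact h_min a haP
    · have haZ : a ∉ Z := hDZ.notMem_of_mem_left (ha.resolve_left haP)
      exact (h_fix a (by simp [haP, haZ])).1

end Complemented

namespace LCirc

variable {β : Type*} {P Z P' Z' M : Set β}

theorem sat_circ_congr {φ : LCirc β}
    (h : ∀ M N, φ.sat M → φ.sat N → (lePZ P Z M N ↔ lePZ P' Z' M N)) :
    (circ φ P Z).sat M ↔ (circ φ P' Z').sat M :=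
  and_congr_right fun hM => forall₂_congr fun N hN =>
    not_congr (and_congr (h N M hN hM) (not_congr (h M N hM hN)))

theorem sat_circ_conj_iff_of_fixed {φ δ : LCirc β}
    (hδ : ∀ M N, (∀ a ∉ P ∪ Z, (a ∈ M ↔ a ∈ N)) → δ.sat M → δ.sat N) :
    (circ (conj φ δ) P Z).sat M ↔ (circ φ P Z).sat M ∧ δ.sat M := by
  constructor
  · rintro ⟨⟨hφM, hδM⟩, hmin⟩
    refine ⟨⟨hφM, fun N hφN hlt => hmin N ⟨hφN, ?_⟩ hlt⟩, hδM⟩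
    exact hδ M N (fun a ha => ((lePZ_iff.1 hlt.1).2 a ha).symm) hδM
  · rintro ⟨⟨hφM, hmin⟩, hδM⟩
    exact ⟨⟨hφM, hδM⟩, fun N hN => hmin N hN.1⟩

theorem sat_emb (φ : LCirc β) (N : Set (β ⊕ β)) : φ.emb.sat N ↔ φ.sat (Sum.inl ⁻¹' N) := by
  induction φ generalizing N with
  | tru => rfl
  | atom a => rfl
  | conj φ χ ihφ ihχ => exact and_congr (ihφ N) (ihχ N)
  | neg φ ih => exact not_congr (ih N)
  | circ φ P Z ih =>
    simp only [emb, sat, ih, ltPZ_image_iff Sum.inl_injective]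
    refine and_congr_right fun _ => ⟨fun hmin M hM hlt => ?_, fun hmin N' hN' hlt => ?_⟩
    · obtain ⟨N', rfl, hN'⟩ := exists_preimage_eq_and_sdiff_range_eq Sum.inl_injective M N
      exact hmin N' hM ⟨hlt, hN'⟩
    · exact hmin _ hN' hlt.1

theorem sat_conjList (l : List (LCirc β)) : (conjList l).sat M ↔ ∀ φ ∈ l, φ.sat M := by
  induction l with
  | nil => simp [conjList, sat]
  | cons φ l ih => rw [List.forall_mem_cons, ← ih]; rfl

theorem sat_iffL (φ χ : LCirc β) : (iffL φ χ).sat M ↔ (φ.sat M ↔ χ.sat M) := by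
  simp only [iffL, sat]
  tauto

end LCirc

section LetterPairs

variable {β : Type*}

/-- The set `{q, q' : q ∈ Q}` of the letters of `Q` together with their auxiliary copies;
`Sum.swap` exchanges `q` and `q'`. -/
def letterPairs (Q : Set β) : Set (β ⊕ β) := Sum.inl '' Q ∪ Sum.inr '' Q

theorem mapsTo_swap_letterPairs (Q : Set β) :
    Set.MapsTo Sum.swap (letterPairs Q) (letterPairs Q) := by
  rintro _ (⟨q, hq, rfl⟩ | ⟨q, hq, rfl⟩)
  · exact .inr ⟨q, hq, rfl⟩
  · exact .inl ⟨q, hq, rfl⟩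

theorem disjoint_letterPairs_image_inl {Q R : Set β} (h : Disjoint Q R) :
    Disjoint (letterPairs Q) (Sum.inl '' R) :=
  .union_left ((Set.disjoint_image_iff Sum.inl_injective).2 h)
    Set.disjoint_image_inl_image_inr.symm

theorem complementedOn_swap_letterPairs_iff {Q : Set β} {N : Set (β ⊕ β)} :
    ComplementedOn Sum.swap (letterPairs Q) N ↔ ∀ q ∈ Q, (Sum.inl q ∈ N ↔ Sum.inr q ∉ N) := by
  simp only [ComplementedOn, letterPairs, Set.mem_union, or_imp, forall_and,
    Set.forall_mem_image, Sum.swap_inl, Sum.swap_inr, and_iff_right_iff_imp]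
  exact fun h q hq => by rw [h hq, not_not]

theorem exists_preimage_inl_eq_and_complementedOn_swap (D : Set (β ⊕ β)) (M : Set β) :
    ∃ N : Set (β ⊕ β), Sum.inl ⁻¹' N = M ∧ ComplementedOn Sum.swap D N := by
  refine ⟨Sum.inl '' M ∪ Sum.inr '' Mᶜ, ?_, ?_⟩
  · ext a
    simp
  · rintro (q | q) - <;> simp

end LetterPairs

theorem sat_iffConj (Q : Set α) (N : Set (α ⊕ α)) :
    (iffConj Q).sat N ↔ ComplementedOn Sum.swap (letterPairs Q) N := by
  simp only [complementedOn_swap_letterPairs_iff, iffConj, LCirc.sat_conjList,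
    List.forall_mem_map, listOf, Finset.mem_toList, Set.Finite.mem_toFinset, LCirc.sat_iffL,
    LCirc.sat]

theorem sat_iffConj_of_fixed {Q R : Set α} (hQR : Disjoint Q R) (M N : Set (α ⊕ α))
    (hMN : ∀ a ∉ Sum.inl '' R, (a ∈ M ↔ a ∈ N)) (hM : (iffConj Q).sat M) :
    (iffConj Q).sat N := by
  rw [sat_iffConj] at hM ⊢
  exact hM.congr (mapsTo_swap_letterPairs Q) fun q hq =>
    hMN q ((disjoint_letterPairs_image_inl hQR).notMem_of_mem_left hq)

theorem sat_circ_conj_iffConj_iff (ψ : LCirc α) (P Z : Set α) (N : Set (α ⊕ α)) :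
    (LCirc.circ (.conj ψ.emb (iffConj (P ∪ Z)ᶜ))
        (Sum.inl '' P ∪ Sum.inl '' (P ∪ Z)ᶜ ∪ Sum.inr '' (P ∪ Z)ᶜ) (Sum.inl '' Z)).sat N ↔
      (LCirc.circ ψ P Z).sat (Sum.inl ⁻¹' N) ∧ (iffConj (P ∪ Z)ᶜ).sat N := by
  have hQ : Disjoint (P ∪ Z)ᶜ (P ∪ Z) := disjoint_compl_left
  calc
    _ ↔ (LCirc.circ (.conj ψ.emb (iffConj (P ∪ Z)ᶜ)) (Sum.inl '' P) (Sum.inl '' Z)).sat N := by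
      rw [Set.union_assoc]
      exact LCirc.sat_circ_congr fun M M' hM hM' =>
        lePZ_union_iff_of_complementedOn (mapsTo_swap_letterPairs _)
          (disjoint_letterPairs_image_inl (hQ.mono_right Set.subset_union_right))
          ((sat_iffConj _ M).1 hM.2) ((sat_iffConj _ M').1 hM'.2)
    _ ↔ (LCirc.circ ψ P Z).emb.sat N ∧ (iffConj (P ∪ Z)ᶜ).sat N :=
      LCirc.sat_circ_conj_iff_of_fixed <| by
        rw [← Set.image_union]
        exact sat_iffConj_of_fixed hQ
    _ ↔ _ := and_congr_left' (LCirc.sat_emb _ N)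

/-- Let `φ = CIRC(ψ;P;Z)` be a circumscriptive atom and let
`Q = At ∖ (P ∪ Z)` be its set of fixed letters.  Put
`ψ' = ψ ∧ ⋀_{q∈Q}(q ↔ ¬q')`, `P' = P ∪ Q ∪ {q' : q ∈ Q}` and `φ' = CIRC(ψ';P';Z)`.
Then, modulo the auxiliary letters `q'`, `φ` and `φ'` are logically equivalent:
`M ⊨ φ` iff some extension of `M` to the auxiliary letters is a model of `φ'`, and
the restriction of every model of `φ'` to the original atoms is a model of `φ`. -/
theorem elim_fixed_letters (ψ : LCirc α) (P Z : Set α) (hPZ : Disjoint P Z) :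
    (∀ M : Set α,
        (LCirc.circ ψ P Z).sat M ↔
          ∃ N : Set (α ⊕ α), Sum.inl ⁻¹' N = M ∧
            (LCirc.circ (.conj ψ.emb (iffConj (P ∪ Z)ᶜ))
                (Sum.inl '' P ∪ Sum.inl '' (P ∪ Z)ᶜ ∪ Sum.inr '' (P ∪ Z)ᶜ)
                (Sum.inl '' Z)).sat N) ∧
    (∀ N : Set (α ⊕ α),
        (LCirc.circ (.conj ψ.emb (iffConj (P ∪ Z)ᶜ))
            (Sum.inl '' P ∪ Sum.inl '' (P ∪ Z)ᶜ ∪ Sum.inr '' (P ∪ Z)ᶜ)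
            (Sum.inl '' Z)).sat N →
          (LCirc.circ ψ P Z).sat (Sum.inl ⁻¹' N)) := by
  simp only [sat_circ_conj_iffConj_iff]
  refine ⟨fun M => ⟨fun hM => ?_, ?_⟩, fun N hN => hN.1⟩
  · obtain ⟨N, rfl, hN⟩ :=
      exists_preimage_inl_eq_and_complementedOn_swap (letterPairs (P ∪ Z)ᶜ) M
    exact ⟨N, rfl, hM, (sat_iffConj _ N).2 hN⟩
  · rintro ⟨N, rfl, hN⟩
    exact hN.1

end NestedCirc
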